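/- Let E be a real inner product space, let τ > 0, σ > 0, and let b, λ ∈ E. Then the functional q ↦ (τ/2)‖b − q‖² + τ⟨b − q, λ⟩ attains its minimum over the closed ball {q ∈ E : ‖q‖ ≤ σ} at the unique point q* := (b + λ) / max(1, ‖b + λ‖/σ); that is, the constrained q-minimization of the ADMM Lagrangian decomposes into the unconstrained solve q̃ = b + λ followed by the pointwise projection q̃ ↦ q̃ / max(1, ‖q̃‖/σ). -/

import Mathlib

open InnerProductSpace

/-- The constrained ADMM `q`-step: the functional `q ↦ (τ/2)‖b - q‖² + τ⟨b - q, λ⟩`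
attains its minimum over the ball `{‖q‖ ≤ σ}` at the unique point
`q* = (b + λ) / max(1, ‖b + λ‖/σ)`, i.e. the unconstrained solve `b + λ` followed by the
pointwise projection onto the ball. -/
theorem admm_q_step_projection
    {E : Type*} [NormedAddCommGroup E] [InnerProductSpace ℝ E]
    (τ σ : ℝ) (hτ : 0 < τ) (hσ : 0 < σ) (b l : E)
    (qstar : E) (hqstar : qstar = (max 1 (‖b + l‖ / σ))⁻¹ • (b + l)) :
    ‖qstar‖ ≤ σ ∧
      (∀ q : E, ‖q‖ ≤ σ →
        τ / 2 * ‖b - qstar‖ ^ 2 + τ * ⟪b - qstar, l⟫_ℝ ≤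
          τ / 2 * ‖b - q‖ ^ 2 + τ * ⟪b - q, l⟫_ℝ) ∧
      (∀ q : E, ‖q‖ ≤ σ →
        (∀ p : E, ‖p‖ ≤ σ →
          τ / 2 * ‖b - q‖ ^ 2 + τ * ⟪b - q, l⟫_ℝ ≤
            τ / 2 * ‖b - p‖ ^ 2 + τ * ⟪b - p, l⟫_ℝ) → q = qstar) := by
  obtain ⟨M, hM⟩ : ∃ M, M = max 1 (‖b + l‖ / σ) := ⟨_, rfl⟩
  rw [← hM] at hqstar
  have hM1 : 1 ≤ M := hM ▸ le_max_left _ _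
  have hM2 : ‖b + l‖ / σ ≤ M := hM ▸ le_max_right _ _
  have hM0 : 0 < M := by linarith
  have hw : b + l = M • qstar := by
    rw [hqstar, smul_smul, mul_inv_cancel₀ hM0.ne', one_smul]
  have hn : ‖b + l‖ = M * ‖qstar‖ := by
    rw [hw, norm_smul, Real.norm_of_nonneg hM0.le]
  have hle : ‖qstar‖ ≤ σ := by
    rw [div_le_iff₀ hσ, hn] at hM2
    exact le_of_mul_le_mul_left hM2 hM0
  have hcomp : (M - 1) * (σ - ‖qstar‖) = 0 := by
    rcases max_choice 1 (‖b + l‖ / σ) with h | h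
    · rw [← hM] at h
      rw [h]; ring
    · rw [← hM, hn, eq_div_iff hσ.ne'] at h
      have := mul_left_cancel₀ hM0.ne' h
      rw [this]; ring
  have hl : l = M • qstar - b := by rw [← hw]; abel
  have key : ∀ q : E, ‖q‖ ≤ σ →
      τ / 2 * ‖b - qstar‖ ^ 2 + τ * ⟪b - qstar, l⟫_ℝ + τ / 2 * ‖q - qstar‖ ^ 2 ≤
        τ / 2 * ‖b - q‖ ^ 2 + τ * ⟪b - q, l⟫_ℝ := by
    intro q hq
    have h1 : ⟪q, qstar⟫_ℝ ≤ σ * ‖qstar‖ :=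
      (real_inner_le_norm q qstar).trans (mul_le_mul_of_nonneg_right hq (norm_nonneg _))
    have h2 : 0 ≤ (M - 1) * (σ * ‖qstar‖ - ⟪q, qstar⟫_ℝ) :=
      mul_nonneg (by linarith) (by linarith)
    have h3 : 0 ≤ (M - 1) * (‖qstar‖ ^ 2 - ⟪q, qstar⟫_ℝ) := by
      linear_combination h2 + ‖qstar‖ * hcomp
    have h4 := mul_nonneg hτ.le h3
    rw [hl]
    simp only [norm_sub_sq_real, inner_sub_left, inner_sub_right, inner_smul_right,
      real_inner_self_eq_norm_sq]
    rw [real_inner_comm b q, real_inner_comm b qstar]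
    linear_combination h4
  refine ⟨hle, fun q hq => ?_, fun q hq h => ?_⟩
  · have := key q hq
    have : 0 ≤ τ / 2 * ‖q - qstar‖ ^ 2 := by positivity
    linarith
  · have h1 := key q hq
    have h2 := h qstar hle
    have h3 : ‖q - qstar‖ ^ 2 ≤ 0 := by
      have : τ / 2 * ‖q - qstar‖ ^ 2 ≤ 0 := by linarith
      exact nonpos_of_mul_nonpos_right this (by positivity)
    have h4 : ‖q - qstar‖ = 0 := by
      have := sq_nonneg ‖q - qstar‖
      exact pow_eq_zero_iff (two_ne_zero) |>.mp (le_antisymm h3 this)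
    exact sub_eq_zero.mp (norm_eq_zero.mp h4)
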